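/- Let n ≥ 1 and let W ∈ ℝ^{n×n} be symmetric with all entries nonnegative, W·𝟏 = 𝟏, and W i i > 0 for every i. Suppose the simple graph on Fin n with adjacency relation 'i ≠ j and W i j ≠ 0' is connected. Then ‖W − J‖₂ < 1, where J is the n×n matrix with all entries 1/n. In particular, the Metropolis weight matrix of a connected graph guarantees convergence of the averaging consensus protocol. -/

import Mathlib

open Matrix

/-- The spectral norm (ℓ2 operator norm) of a real square matrix. -/
noncomputable def specNorm {n : ℕ} (M : Matrix (Fin n) (Fin n) ℝ) : ℝ :=
  ‖Matrix.toEuclideanCLM (𝕜 := ℝ) M‖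

/-!
Since `W` fixes constants, `W - J = W (1 - J)`, where `1 - J` is the orthogonal projection onto the
vectors of mean zero. For doubly stochastic `W`, summing the variance of `u` with respect to each
row of `W` gives `‖u‖² - ‖W u‖² = ∑ i j, W i j (u j - (W u) i)²`, so `‖W u‖ < ‖u‖` unless
`u j = u k` whenever columns `j` and `k` of `W` both have a nonzero entry in some row. If such pairs
connect the index set, then equality makes `u` constant, hence zero when it has mean zero. A
positive diagonal makes every edge of the support graph such a pair.
-/

open Finset

theorem opNorm_lt_one_of_forall_norm_apply_lt {𝕜 E F : Type*} [DenselyNormedField 𝕜]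
    [NormedAddCommGroup E] [NormedSpace 𝕜 E] [ProperSpace E]
    [SeminormedAddCommGroup F] [NormedSpace 𝕜 F]
    {T : E →L[𝕜] F} (hT : ∀ x, x ≠ 0 → ‖T x‖ < ‖x‖) : ‖T‖ < 1 := by
  rw [← T.sSup_unitClosedBall_eq_norm, (isCompact_closedBall (0 : E) 1).sSup_lt_iff_of_continuous
    ⟨0, by simp⟩ T.continuous.norm.continuousOn]
  intro x hx
  obtain rfl | hx0 := eq_or_ne x 0
  · simp
  · exact (hT x hx0).trans_le (mem_closedBall_zero_iff.1 hx)

theorem eq_of_preconnected_of_forall_adj {V α : Type*} {G : SimpleGraph V} (hG : G.Preconnected)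
    {f : V → α} (hf : ∀ i j, G.Adj i j → f i = f j) (i j : V) : f i = f j := by
  obtain ⟨p⟩ := hG i j
  induction p with
  | nil => rfl
  | cons h _ ih => exact (hf _ _ h).trans ih

section Dispersion

variable {R m n : Type*} [CommRing R] [Fintype m] [Fintype n]

theorem sum_mul_sub_dotProduct_sq {w : n → R} (hw : ∑ j, w j = 1) (u : n → R) :
    ∑ j, w j * (u j - w ⬝ᵥ u) ^ 2 = ∑ j, w j * u j ^ 2 - (w ⬝ᵥ u) ^ 2 := by
  have hexpand (j : n) : w j * (u j - w ⬝ᵥ u) ^ 2 =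
      w j * u j ^ 2 - 2 * (w ⬝ᵥ u) * (w j * u j) + (w ⬝ᵥ u) ^ 2 * w j := by ring
  have hmean : ∑ j, w j * u j = w ⬝ᵥ u := rfl
  simp only [hexpand, sum_add_distrib, sum_sub_distrib, ← mul_sum, hw, hmean]
  ring

theorem sum_sum_mul_sub_mulVec_sq {W : Matrix m n R} (hrow : ∀ i, ∑ j, W i j = 1)
    (hcol : ∀ j, ∑ i, W i j = 1) (u : n → R) :
    ∑ i, ∑ j, W i j * (u j - (W *ᵥ u) i) ^ 2 = ∑ j, u j ^ 2 - ∑ i, (W *ᵥ u) i ^ 2 :=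
  calc ∑ i, ∑ j, W i j * (u j - (W *ᵥ u) i) ^ 2
      = ∑ i, (∑ j, W i j * u j ^ 2 - (W *ᵥ u) i ^ 2) :=
        sum_congr rfl fun i _ => sum_mul_sub_dotProduct_sq (hrow i) u
    _ = ∑ j, u j ^ 2 - ∑ i, (W *ᵥ u) i ^ 2 := by
        rw [sum_sub_distrib, sum_comm]
        simp only [← sum_mul, hcol, one_mul]

end Dispersion

section AveragingMatrix

variable (R ι : Type*) [DivisionRing R] [Fintype ι]

/-- The matrix `J` with all entries `1 / |ι|`, which replaces every coordinate of a vector by the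
mean of its coordinates. -/
def averagingMatrix : Matrix ι ι R :=
  of fun _ _ => (Fintype.card ι : R)⁻¹

variable {R ι}

theorem mul_averagingMatrix {W : Matrix ι ι R} (hW : ∀ i, ∑ j, W i j = 1) :
    W * averagingMatrix R ι = averagingMatrix R ι := by
  ext i j
  simp [averagingMatrix, mul_apply, ← sum_mul, hW]

variable [CharZero R]

theorem sum_averagingMatrix_apply (i : ι) : ∑ j, averagingMatrix R ι i j = 1 := by
  have : Nonempty ι := ⟨i⟩
  simp [averagingMatrix]

theorem averagingMatrix_mulVec_of_forall_eq {u : ι → R} (hu : ∀ i j, u i = u j) :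
    averagingMatrix R ι *ᵥ u = u := by
  funext i
  calc (averagingMatrix R ι *ᵥ u) i = ∑ j, averagingMatrix R ι i j * u i :=
        sum_congr rfl fun j _ => by rw [hu j i]
    _ = u i := by rw [← sum_mul, sum_averagingMatrix_apply, one_mul]

theorem isStarProjection_averagingMatrix [StarRing R] :
    IsStarProjection (averagingMatrix R ι) where
  isIdempotentElem := mul_averagingMatrix sum_averagingMatrix_apply
  isSelfAdjoint := by
    ext i j
    simp [averagingMatrix]

end AveragingMatrix

section DoublyStochastic

variable {ι : Type*} [Fintype ι] [DecidableEq ι]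

theorem eq_mulVec_apply_of_sum_sq_le {R : Type*} [CommRing R] [LinearOrder R]
    [IsStrictOrderedRing R] {W : Matrix ι ι R} {u : ι → R} (hW : W ∈ doublyStochastic R ι)
    (hu : ∑ j, u j ^ 2 ≤ ∑ i, (W *ᵥ u) i ^ 2) {i j : ι} (hij : W i j ≠ 0) :
    u j = (W *ᵥ u) i := by
  have hterm (i j : ι) : 0 ≤ W i j * (u j - (W *ᵥ u) i) ^ 2 :=
    mul_nonneg (nonneg_of_mem_doublyStochastic hW) (sq_nonneg _)
  have hinner (i : ι) : 0 ≤ ∑ j, W i j * (u j - (W *ᵥ u) i) ^ 2 :=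
    sum_nonneg fun j _ => hterm i j
  have htotal : ∑ i, ∑ j, W i j * (u j - (W *ᵥ u) i) ^ 2 = 0 := by
    refine le_antisymm ?_ (sum_nonneg fun i _ => hinner i)
    rw [sum_sum_mul_sub_mulVec_sq (sum_row_of_mem_doublyStochastic hW)
      (sum_col_of_mem_doublyStochastic hW)]
    exact sub_nonpos.2 hu
  have hrow := (sum_eq_zero_iff_of_nonneg fun i _ => hinner i).1 htotal i (mem_univ i)
  have hentry := (sum_eq_zero_iff_of_nonneg fun j _ => hterm i j).1 hrow j (mem_univ j)
  exact sub_eq_zero.1 (pow_eq_zero_iff two_ne_zero |>.1 ((mul_eq_zero.1 hentry).resolve_left hij))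

theorem sum_mulVec_sq_lt_sum_sq {R : Type*} [Field R] [LinearOrder R] [IsStrictOrderedRing R]
    {W : Matrix ι ι R} {u : ι → R} (hW : W ∈ doublyStochastic R ι) {G : SimpleGraph ι}
    (hconn : G.Preconnected) (hG : ∀ j k, G.Adj j k → ∃ i, W i j ≠ 0 ∧ W i k ≠ 0)
    (hmean : averagingMatrix R ι *ᵥ u = 0) (hu : u ≠ 0) :
    ∑ i, (W *ᵥ u) i ^ 2 < ∑ j, u j ^ 2 := by
  by_contra! hle
  have hadj (j k : ι) (hjk : G.Adj j k) : u j = u k := by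
    obtain ⟨i, hij, hik⟩ := hG j k hjk
    rw [eq_mulVec_apply_of_sum_sq_le hW hle hij, eq_mulVec_apply_of_sum_sq_le hW hle hik]
  have hconst := eq_of_preconnected_of_forall_adj hconn hadj
  exact hu ((averagingMatrix_mulVec_of_forall_eq hconst).symm.trans hmean)

theorem norm_toEuclideanCLM_apply_lt {W : Matrix ι ι ℝ} (hW : W ∈ doublyStochastic ℝ ι)
    {G : SimpleGraph ι} (hconn : G.Preconnected)
    (hG : ∀ j k, G.Adj j k → ∃ i, W i j ≠ 0 ∧ W i k ≠ 0) {u : EuclideanSpace ℝ ι}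
    (hmean : toEuclideanCLM (𝕜 := ℝ) (averagingMatrix ℝ ι) u = 0) (hu : u ≠ 0) :
    ‖toEuclideanCLM (𝕜 := ℝ) W u‖ < ‖u‖ := by
  rw [← sq_lt_sq₀ (norm_nonneg _) (norm_nonneg _), EuclideanSpace.real_norm_sq_eq,
    EuclideanSpace.real_norm_sq_eq]
  exact sum_mulVec_sq_lt_sum_sq hW hconn hG (congrArg WithLp.ofLp hmean)
    (mt (WithLp.ofLp_eq_zero 2).1 hu)

theorem stmt11_general {W : Matrix ι ι ℝ} (hW : W ∈ doublyStochastic ℝ ι) {G : SimpleGraph ι}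
    (hconn : G.Preconnected) (hG : ∀ j k, G.Adj j k → ∃ i, W i j ≠ 0 ∧ W i k ≠ 0) :
    ‖toEuclideanCLM (𝕜 := ℝ) (W - averagingMatrix ℝ ι)‖ < 1 := by
  refine opNorm_lt_one_of_forall_norm_apply_lt fun x hx => ?_
  set P := toEuclideanCLM (𝕜 := ℝ) (averagingMatrix ℝ ι)
  have hP : IsStarProjection P := isStarProjection_averagingMatrix.map toEuclideanCLM
  have hcenter : ‖(1 - P) x‖ ≤ ‖x‖ :=
    ((1 - P).le_of_opNorm_le hP.one_sub.norm_le x).trans_eq (one_mul _)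
  have hmean : P ((1 - P) x) = 0 := congrArg (fun T => T x) hP.mul_one_sub_self
  have hfactor : W - averagingMatrix ℝ ι = W * (1 - averagingMatrix ℝ ι) := by
    rw [mul_sub, mul_one, mul_averagingMatrix (sum_row_of_mem_doublyStochastic hW)]
  rw [hfactor, map_mul, map_sub, map_one, mul_apply_eq_comp]
  obtain hzero | hne := eq_or_ne ((1 - P) x) 0
  · rw [hzero, map_zero, norm_zero]
    exact norm_pos_iff.2 hx
  · exact (norm_toEuclideanCLM_apply_lt hW hconn hG hmean hne).trans_le hcenter

end DoublyStochastic

/-- a symmetric doubly stochastic matrix with positive diagonal whose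
support graph (adjacency `i ≠ j ∧ W i j ≠ 0`) is connected satisfies `‖W − J‖₂ < 1`,
hence guarantees convergence of the averaging consensus protocol. -/
theorem stmt11 {n : ℕ} (hn : 1 ≤ n) (W : Matrix (Fin n) (Fin n) ℝ)
    (hsym : Wᵀ = W)
    (hnonneg : ∀ i j, 0 ≤ W i j)
    (h1 : W *ᵥ (fun _ => (1 : ℝ)) = (fun _ => (1 : ℝ)))
    (hdiag : ∀ i, 0 < W i i)
    (G : SimpleGraph (Fin n)) (hG : ∀ i j, G.Adj i j ↔ i ≠ j ∧ W i j ≠ 0)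
    (hconn : G.Connected)
    (J : Matrix (Fin n) (Fin n) ℝ) (hJ : ∀ i j, J i j = 1 / n) :
    specNorm (W - J) < 1 := by
  have hW : W ∈ doublyStochastic ℝ (Fin n) :=
    mem_doublyStochastic.2 ⟨hnonneg, h1, by rw [← mulVec_transpose, hsym]; exact h1⟩
  obtain rfl : J = averagingMatrix ℝ (Fin n) := by ext; simp [hJ, averagingMatrix]
  exact stmt11_general hW hconn.preconnected
    fun j k hjk => ⟨j, (hdiag j).ne', ((hG j k).1 hjk).2⟩
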